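/- The credit-inheritance cost model (⇓ᶜᴵ, Φᶜᴵ, ⌊·⌋ᶜᴵ) is sound: whenever Γ : e ⇓ᶜᴵ_n Δ : v, there exists k with ⌊Γ⌋ᶜᴵ : e ⇓ᴿ_k ⌊Δ⌋ᶜᴵ : v and k + Φᶜᴵ(Δ) − Φᶜᴵ(Γ) ≤ n. -/

import Mathlib

/-! ## Syntax of the fine-grain call-by-value lambda calculus with thunks -/

mutual
inductive Val : Type where
  | var : String → Val
  | ptr : Nat → Val
  | unit : Val
  | inl : Val → Val
  | inr : Val → Val
  | pair : Val → Val → Val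
  | lam : String → Expr → Val

inductive HeapVal : Type where
  | fold : Val → HeapVal
  | memo : Val → HeapVal
  | lazy : String → Val → HeapVal

inductive Expr : Type where
  | ret : Val → Expr
  | alloc : HeapVal → Expr
  | letE : String → Expr → Expr → Expr
  | caseE : Val → String → Expr → String → Expr → Expr
  | splitE : Val → String → String → Expr → Expr
  | app : Val → Val → Expr
  | unfoldE : Val → Expr
  | call : String → Val → Expr
  | force : Val → Expr
  | save : Nat → Val → Expr
  | spend : Nat → Val → Expr → Expr
  | pass : Val → Expr
end

/-! ## Capture-avoiding substitution (values substituted are closed) -/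

mutual
def substV (v : Val) (x : String) : Val → Val
  | .var y => if y = x then v else .var y
  | .ptr a => .ptr a
  | .unit => .unit
  | .inl w => .inl (substV v x w)
  | .inr w => .inr (substV v x w)
  | .pair w₁ w₂ => .pair (substV v x w₁) (substV v x w₂)
  | .lam y e => if y = x then .lam y e else .lam y (substE v x e)

def substH (v : Val) (x : String) : HeapVal → HeapVal
  | .fold w => .fold (substV v x w)
  | .memo w => .memo (substV v x w)
  | .lazy F w => .lazy F (substV v x w)

def substE (v : Val) (x : String) : Expr → Expr
  | .ret w => .ret (substV v x w)
  | .alloc hv => .alloc (substH v x hv)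
  | .letE y e₁ e₂ => .letE y (substE v x e₁) (if y = x then e₂ else substE v x e₂)
  | .caseE w y₁ e₁ y₂ e₂ =>
      .caseE (substV v x w) y₁ (if y₁ = x then e₁ else substE v x e₁)
        y₂ (if y₂ = x then e₂ else substE v x e₂)
  | .splitE w y₁ y₂ e =>
      .splitE (substV v x w) y₁ y₂ (if y₁ = x ∨ y₂ = x then e else substE v x e)
  | .app w₁ w₂ => .app (substV v x w₁) (substV v x w₂)
  | .unfoldE w => .unfoldE (substV v x w)
  | .call F w => .call F (substV v x w)
  | .force w => .force (substV v x w)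
  | .save n w => .save n (substV v x w)
  | .spend n w e => .spend n (substV v x w) (substE v x e)
  | .pass w => .pass (substV v x w)
end

/-! ## Heaps: finite partial maps from pointers to (annotated) heap values -/

structure Heap (A : Type) : Type where
  look : Nat → Option A
  fin : {a : Nat | look a ≠ none}.Finite

namespace Heap

def empty {A : Type} : Heap A := ⟨fun _ => none, by simp⟩

def upd {A : Type} (Γ : Heap A) (a : Nat) (v : A) : Heap A :=
  ⟨fun b => if b = a then some v else Γ.look b, by
    apply Set.Finite.subset (Γ.fin.insert a)
    intro b hb
    simp only [Set.mem_setOf_eq] at hb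
    by_cases h : b = a
    · simp [h]
    · simp only [h, if_false] at hb
      exact Set.mem_insert_iff.mpr (Or.inr hb)⟩

def erase {A : Type} (Γ : Heap A) (a : Nat) : Heap A :=
  ⟨fun b => if b = a then none else Γ.look b, by
    apply Set.Finite.subset Γ.fin
    intro b hb
    simp only [Set.mem_setOf_eq] at hb ⊢
    by_cases h : b = a
    · simp [h] at hb
    · simpa [h] using hb⟩

def eraseSet {A : Type} (Γ : Heap A) (D : Finset Nat) : Heap A :=
  ⟨fun b => if b ∈ D then none else Γ.look b, by
    apply Set.Finite.subset Γ.fin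
    intro b hb
    simp only [Set.mem_setOf_eq] at hb ⊢
    by_cases h : b ∈ D
    · simp [h] at hb
    · simpa [h] using hb⟩

def map {A B : Type} (Γ : Heap A) (f : A → B) : Heap B :=
  ⟨fun b => (Γ.look b).map f, by
    apply Set.Finite.subset Γ.fin
    intro b hb
    simp only [Set.mem_setOf_eq] at hb ⊢
    intro h
    rw [h] at hb
    simp at hb⟩

noncomputable def dom {A : Type} (Γ : Heap A) : Finset Nat := Γ.fin.toFinset

/-- Sum a numeric annotation over all cells of the heap. -/
noncomputable def total {A : Type} (Γ : Heap A) (f : A → ℕ) : ℕ :=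
  ∑ a ∈ Γ.dom, (Γ.look a).elim 0 f

end Heap

/-! ## The real cost semantics ⇓ᴿ -/

/-- Environment of top-level (possibly recursive) function definitions. -/
abbrev FEnv := String → Option (String × Expr)

abbrev RHeap := Heap HeapVal

/-- Big-step real semantics `Γ : e ⇓ᴿ_k Δ : v`.  Lambda applications and
function calls cost one step; `save`, `spend` and `pass` are no-ops. -/
inductive RBig (𝓕 : FEnv) : RHeap → Expr → Nat → RHeap → Val → Prop where
  | ret : ∀ Γ v, RBig 𝓕 Γ (.ret v) 0 Γ v
  | alloc : ∀ Γ a hv, Γ.look a = none →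
      RBig 𝓕 Γ (.alloc hv) 0 (Γ.upd a hv) (.ptr a)
  | letE : ∀ Γ Δ Θ x e₁ e₂ k l v w,
      RBig 𝓕 Γ e₁ k Δ v → RBig 𝓕 Δ (substE v x e₂) l Θ w →
      RBig 𝓕 Γ (.letE x e₁ e₂) (k + l) Θ w
  | caseL : ∀ Γ Δ v x₁ e₁ x₂ e₂ k w,
      RBig 𝓕 Γ (substE v x₁ e₁) k Δ w →
      RBig 𝓕 Γ (.caseE (.inl v) x₁ e₁ x₂ e₂) k Δ w
  | caseR : ∀ Γ Δ v x₁ e₁ x₂ e₂ k w,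
      RBig 𝓕 Γ (substE v x₂ e₂) k Δ w →
      RBig 𝓕 Γ (.caseE (.inr v) x₁ e₁ x₂ e₂) k Δ w
  | splitE : ∀ Γ Δ v₁ v₂ x y e k w,
      RBig 𝓕 Γ (substE v₂ y (substE v₁ x e)) k Δ w →
      RBig 𝓕 Γ (.splitE (.pair v₁ v₂) x y e) k Δ w
  | app : ∀ Γ Δ x e v k w,
      RBig 𝓕 Γ (substE v x e) k Δ w →
      RBig 𝓕 Γ (.app (.lam x e) v) (k + 1) Δ w
  | unfoldE : ∀ Γ a v, Γ.look a = some (.fold v) →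
      RBig 𝓕 Γ (.unfoldE (.ptr a)) 0 Γ v
  | call : ∀ Γ Δ F x e v k w, 𝓕 F = some (x, e) →
      RBig 𝓕 Γ (substE v x e) k Δ w →
      RBig 𝓕 Γ (.call F v) (k + 1) Δ w
  | force : ∀ Γ Δ a F v k w, Γ.look a = some (.lazy F v) →
      RBig 𝓕 (Γ.erase a) (.call F v) k Δ w →
      RBig 𝓕 Γ (.force (.ptr a)) k (Δ.upd a (.memo w)) w
  | recall : ∀ Γ a v, Γ.look a = some (.memo v) →
      RBig 𝓕 Γ (.force (.ptr a)) 0 Γ v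
  | save : ∀ Γ m v, RBig 𝓕 Γ (.save m v) 0 Γ v
  | spend : ∀ Γ Δ m v e k w, RBig 𝓕 Γ e k Δ w →
      RBig 𝓕 Γ (.spend m v e) k Δ w
  | pass : ∀ Γ v, RBig 𝓕 Γ (.pass v) 0 Γ v

/-! ## Credit inheritance ⇓ᶜᴵ : memoised thunks carry an optional heir -/

/-- Heap values of the credit-inheritance model: credits on lazy thunks,
an (optional) heir pointer on memoised thunks. -/
inductive CIHV : Type where
  | fold : Val → CIHV
  | memo : Option ℕ → Val → CIHV
  | lazy : ℕ → String → Val → CIHV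

abbrev CIHeap := Heap CIHV

/-- Allocation in the credit-inheritance model. -/
def toCIHV : HeapVal → CIHV
  | .fold v => .fold v
  | .memo v => .memo none v
  | .lazy F v => .lazy 0 F v

/-- An heir set of at most one pointer, represented as an `Option`. -/
abbrev Heir := Option ℕ

/-- Union of two heir sets (used in the let rule). -/
def heirUnion (H₁ H₂ : Heir) : Heir := H₁.elim H₂ some

/-- The side condition `|h₁ ∪ h₂| ≤ 1` of the let rule. -/
def heirCompat (H₁ H₂ : Heir) : Prop := H₁ = none ∨ H₂ = none ∨ H₁ = H₂

/-- Big-step credit-inheritance semantics `Γ : e ⇓^H_k Δ : v`, where `H` is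
the heir set (of at most one pointer) chosen by the computation. -/
inductive CIBig (𝓕 : FEnv) : CIHeap → Expr → Heir → Nat → CIHeap → Val → Prop where
  | ret : ∀ Γ v, CIBig 𝓕 Γ (.ret v) none 0 Γ v
  | alloc : ∀ Γ a hv, Γ.look a = none →
      CIBig 𝓕 Γ (.alloc hv) none 0 (Γ.upd a (toCIHV hv)) (.ptr a)
  | letE : ∀ Γ Δ Θ x e₁ e₂ H₁ H₂ k l v w,
      CIBig 𝓕 Γ e₁ H₁ k Δ v → CIBig 𝓕 Δ (substE v x e₂) H₂ l Θ w →
      heirCompat H₁ H₂ →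
      CIBig 𝓕 Γ (.letE x e₁ e₂) (heirUnion H₁ H₂) (k + l) Θ w
  | caseL : ∀ Γ Δ v x₁ e₁ x₂ e₂ H k w,
      CIBig 𝓕 Γ (substE v x₁ e₁) H k Δ w →
      CIBig 𝓕 Γ (.caseE (.inl v) x₁ e₁ x₂ e₂) H k Δ w
  | caseR : ∀ Γ Δ v x₁ e₁ x₂ e₂ H k w,
      CIBig 𝓕 Γ (substE v x₂ e₂) H k Δ w →
      CIBig 𝓕 Γ (.caseE (.inr v) x₁ e₁ x₂ e₂) H k Δ w
  | splitE : ∀ Γ Δ v₁ v₂ x y e H k w,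
      CIBig 𝓕 Γ (substE v₂ y (substE v₁ x e)) H k Δ w →
      CIBig 𝓕 Γ (.splitE (.pair v₁ v₂) x y e) H k Δ w
  | app : ∀ Γ Δ x e v H k w,
      CIBig 𝓕 Γ (substE v x e) H k Δ w →
      CIBig 𝓕 Γ (.app (.lam x e) v) H (k + 1) Δ w
  | unfoldE : ∀ Γ a v, Γ.look a = some (.fold v) →
      CIBig 𝓕 Γ (.unfoldE (.ptr a)) none 0 Γ v
  | call : ∀ Γ Δ F x e v H k w, 𝓕 F = some (x, e) →
      CIBig 𝓕 Γ (substE v x e) H k Δ w →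
      CIBig 𝓕 Γ (.call F v) H (k + 1) Δ w
  | save : ∀ Γ a n F v m, Γ.look a = some (.lazy n F v) →
      CIBig 𝓕 Γ (.save m (.ptr a)) none m (Γ.upd a (.lazy (n + m) F v)) (.ptr a)
  | waste : ∀ Γ a v m, Γ.look a = some (.memo none v) →
      CIBig 𝓕 Γ (.save m (.ptr a)) none m Γ (.ptr a)
  | inherit : ∀ Γ Δ a h w m v, Γ.look a = some (.memo (some h) w) →
      CIBig 𝓕 Γ (.save m (.ptr h)) none m Δ v →
      CIBig 𝓕 Γ (.save m (.ptr a)) none m Δ (.ptr a)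
  | pass : ∀ Γ Δ h m v,
      CIBig 𝓕 Γ (.save m (.ptr h)) none m Δ v →
      CIBig 𝓕 Γ (.pass (.ptr h)) (some h) m Δ v
  | force : ∀ Γ Δ a n F v H k w, Γ.look a = some (.lazy n F v) →
      CIBig 𝓕 (Γ.erase a) (.call F v) H k Δ w → k = n →
      CIBig 𝓕 Γ (.force (.ptr a)) none 0 (Δ.upd a (.memo H w)) w
  | recall : ∀ Γ a H v, Γ.look a = some (.memo H v) →
      CIBig 𝓕 Γ (.force (.ptr a)) none 0 Γ v

/-- The potential Φᶜᴵ: the total number of credits on lazy thunks. -/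
noncomputable def ΦCI (Γ : CIHeap) : ℕ :=
  Γ.total (fun hv => match hv with | .lazy n _ _ => n | _ => 0)

/-- The erasure ⌊·⌋ᶜᴵ: drop credit and heir annotations. -/
def stripCI (Γ : CIHeap) : RHeap :=
  Γ.map (fun hv => match hv with
    | .fold v => .fold v
    | .memo _ v => .memo v
    | .lazy _ F v => .lazy F v)

namespace Heap

theorem ext_look {A : Type} {Γ Δ : Heap A} (h : ∀ b, Γ.look b = Δ.look b) : Γ = Δ := by
  cases Γ; cases Δ
  have := funext h
  simp only at this
  subst this
  rfl

theorem total_eq_sum {A : Type} (Γ : Heap A) (f : A → ℕ) (S : Finset ℕ) (h : Γ.dom ⊆ S) :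
    Γ.total f = ∑ a ∈ S, (Γ.look a).elim 0 f := by
  unfold total
  apply Finset.sum_subset h
  intro b _ hb
  have : Γ.look b = none := by
    by_contra hne
    exact hb (by simpa [dom] using hne)
  simp [this]

theorem total_erase {A : Type} (Γ : Heap A) (f : A → ℕ) (a : ℕ) :
    Γ.total f = (Γ.erase a).total f + (Γ.look a).elim 0 f := by
  rw [total_eq_sum Γ f (insert a Γ.dom) (Finset.subset_insert _ _),
    total_eq_sum (Γ.erase a) f (insert a Γ.dom)]
  · rw [← Finset.sum_erase_add _ _ (Finset.mem_insert_self a Γ.dom),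
      ← Finset.sum_erase_add (insert a Γ.dom) (fun b => ((Γ.erase a).look b).elim 0 f)
        (Finset.mem_insert_self a Γ.dom)]
    have : ∑ b ∈ (insert a Γ.dom).erase a, (Γ.look b).elim 0 f
        = ∑ b ∈ (insert a Γ.dom).erase a, ((Γ.erase a).look b).elim 0 f := by
      apply Finset.sum_congr rfl
      intro b hb
      simp [erase, Finset.ne_of_mem_erase hb]
    rw [this]
    simp [erase]
  · intro b hb
    simp only [dom, Set.Finite.mem_toFinset, Set.mem_setOf_eq, erase] at hb
    by_cases h : b = a
    · simp [h]
    · simp only [h, if_false] at hb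
      simpa [dom, h] using hb

theorem erase_upd {A : Type} (Γ : Heap A) (a : ℕ) (v : A) :
    (Γ.upd a v).erase a = Γ.erase a := by
  apply ext_look
  intro b
  by_cases h : b = a <;> simp [erase, upd, h]

theorem total_upd {A : Type} (Γ : Heap A) (f : A → ℕ) (a : ℕ) (v : A) :
    (Γ.upd a v).total f = (Γ.erase a).total f + f v := by
  rw [total_erase _ f a, erase_upd]
  simp [upd]

theorem map_upd {A B : Type} (Γ : Heap A) (f : A → B) (a : ℕ) (v : A) :
    (Γ.upd a v).map f = (Γ.map f).upd a (f v) := by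
  apply ext_look
  intro b
  by_cases h : b = a <;> simp [map, upd, h]

theorem map_erase {A B : Type} (Γ : Heap A) (f : A → B) (a : ℕ) :
    (Γ.erase a).map f = (Γ.map f).erase a := by
  apply ext_look
  intro b
  by_cases h : b = a <;> simp [map, erase, h]

theorem upd_self {A : Type} (Γ : Heap A) (a : ℕ) (v : A) (h : Γ.look a = some v) :
    Γ.upd a v = Γ := by
  apply ext_look
  intro b
  by_cases hb : b = a <;> simp [upd, hb, h]

end Heap

/-- Inversion of the real semantics on `save`. -/
theorem RBig.save_inv {𝓕 : FEnv} {Γ Δ : RHeap} {m k : ℕ} {u v : Val}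
    (h : RBig 𝓕 Γ (.save m u) k Δ v) : k = 0 ∧ Δ = Γ ∧ v = u := by
  cases h
  exact ⟨rfl, rfl, rfl⟩

/-- Generalisation of soundness to arbitrary heir sets. -/
theorem credit_inheritance_sound_aux (𝓕 : FEnv) (Γ Δ : CIHeap) (e : Expr) (H : Heir)
    (n : ℕ) (v : Val) (h : CIBig 𝓕 Γ e H n Δ v) :
    ∃ k : ℕ, RBig 𝓕 (stripCI Γ) e k (stripCI Δ) v ∧ k + ΦCI Δ ≤ n + ΦCI Γ := by
  induction h with
  | ret Γ v => exact ⟨0, .ret _ _, le_refl _⟩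
  | alloc Γ a hv ha =>
    refine ⟨0, ?_, ?_⟩
    · have := RBig.alloc (𝓕 := 𝓕) (stripCI Γ) a hv (by simp [stripCI, Heap.map, ha])
      unfold stripCI at this ⊢
      rw [Heap.map_upd]
      cases hv <;> exact this
    · unfold ΦCI
      rw [Heap.total_upd, Heap.total_erase Γ _ a]
      cases hv <;> simp [toCIHV]
  | letE Γ Δ Θ x e₁ e₂ H₁ H₂ k l v w _ _ _ ih₁ ih₂ =>
    obtain ⟨k₁, r₁, p₁⟩ := ih₁
    obtain ⟨k₂, r₂, p₂⟩ := ih₂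
    exact ⟨k₁ + k₂, .letE _ _ _ _ _ _ _ _ _ _ r₁ r₂, by omega⟩
  | caseL Γ Δ v x₁ e₁ x₂ e₂ H k w _ ih =>
    obtain ⟨k, r, p⟩ := ih
    exact ⟨k, .caseL _ _ _ _ _ _ _ _ _ r, p⟩
  | caseR Γ Δ v x₁ e₁ x₂ e₂ H k w _ ih =>
    obtain ⟨k, r, p⟩ := ih
    exact ⟨k, .caseR _ _ _ _ _ _ _ _ _ r, p⟩
  | splitE Γ Δ v₁ v₂ x y e H k w _ ih =>
    obtain ⟨k, r, p⟩ := ih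
    exact ⟨k, .splitE _ _ _ _ _ _ _ _ _ r, p⟩
  | app Γ Δ x e v H k w _ ih =>
    obtain ⟨k, r, p⟩ := ih
    exact ⟨k + 1, .app _ _ _ _ _ _ _ r, by omega⟩
  | unfoldE Γ a v ha =>
    exact ⟨0, .unfoldE _ _ _ (by simp [stripCI, Heap.map, ha]), le_refl _⟩
  | call Γ Δ F x e v H k w hF _ ih =>
    obtain ⟨k, r, p⟩ := ih
    exact ⟨k + 1, .call _ _ _ _ _ _ _ _ hF r, by omega⟩
  | save Γ a n F v m ha =>
    refine ⟨0, ?_, ?_⟩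
    · have hs : stripCI (Γ.upd a (.lazy (n + m) F v)) = stripCI Γ := by
        unfold stripCI
        rw [Heap.map_upd]
        exact Heap.upd_self _ _ _ (by simp [Heap.map, ha])
      rw [hs]
      exact .save _ _ _
    · unfold ΦCI
      rw [Heap.total_upd, Heap.total_erase Γ _ a, ha]
      simp only [Option.elim]
      omega
  | waste Γ a v m ha => exact ⟨0, .save _ _ _, by omega⟩
  | inherit Γ Δ a h w m v ha _ ih =>
    obtain ⟨k, r, p⟩ := ih
    obtain ⟨rfl, hs, _⟩ := r.save_inv
    rw [hs]
    exact ⟨0, .save _ _ _, p⟩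
  | pass Γ Δ h m v _ ih =>
    obtain ⟨k, r, p⟩ := ih
    obtain ⟨rfl, hs, rfl⟩ := r.save_inv
    rw [hs]
    exact ⟨0, .pass _ _, p⟩
  | force Γ Δ a n F v H k w ha _ hk ih =>
    obtain ⟨j, r, p⟩ := ih
    refine ⟨j, ?_, ?_⟩
    · unfold stripCI at r ⊢
      rw [Heap.map_erase] at r
      rw [Heap.map_upd]
      exact .force _ _ _ F v _ _ (by simp [Heap.map, ha]) r
    · unfold ΦCI at p ⊢
      rw [Heap.total_upd, Heap.total_erase Γ _ a, ha]
      rw [Heap.total_erase Δ _ a] at p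
      simp only [Option.elim] at p ⊢
      omega
  | _ =>
    rename_i Γ a H v ha
    exact ⟨0, RBig.recall _ _ _ (by simp [stripCI, Heap.map, ha]), le_refl _⟩

/-- **Soundness of the credit-inheritance cost model** (Lemma
`credit-inheritance-sound`): whenever `Γ : e ⇓ᶜᴵ_n Δ : v`, there exists `k`
with `⌊Γ⌋ᶜᴵ : e ⇓ᴿ_k ⌊Δ⌋ᶜᴵ : v` and `k + Φᶜᴵ(Δ) − Φᶜᴵ(Γ) ≤ n`. -/
theorem credit_inheritance_sound (𝓕 : FEnv) (Γ Δ : CIHeap) (e : Expr)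
    (n : ℕ) (v : Val)
    (h : CIBig 𝓕 Γ e none n Δ v) :
    ∃ k : ℕ, RBig 𝓕 (stripCI Γ) e k (stripCI Δ) v ∧
      (k : ℤ) + (ΦCI Δ : ℤ) - (ΦCI Γ : ℤ) ≤ (n : ℤ) := by
  obtain ⟨k, r, p⟩ := credit_inheritance_sound_aux 𝓕 Γ Δ e none n v h
  exact ⟨k, r, by omega⟩
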